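/- Fix a rank n ≥ 1, an integer M ≥ 1, a content vector J ∈ ℕ^n with |J| ≤ M, occupation vectors I, K ∈ ℕ^n, and a word ℓ ∈ {0,…,n}^M. For a permutation π of {1,…,M} write ℓ∘π for the word (ℓ_{π(1)},…,ℓ_{π(M)}), and rev(w) := (w_M,…,w_1). Then for any two permutations π and π' of {1,…,M}: t^{𝓘(rev(ℓ∘π))} · ∑_{j ∈ {0,…,n}^M : m(j) = J} t^{-𝓘(rev(j))} · Π(j, ℓ∘π; I, K; x) = t^{𝓘(rev(ℓ∘π'))} · ∑_{j ∈ {0,…,n}^M : m(j) = J} t^{-𝓘(rev(j))} · Π(j, ℓ∘π'; I, K; x), as elements of ℤ[x][t, t^{-1}]. -/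

import Mathlib

/-!
Since adjacent transpositions generate the symmetric group, it suffices to show that the
normalised sum (`part`) does not change when the letters of `l` in two neighbouring positions
`i, i + 1` are exchanged.

The requirement that all `I^s` be nonnegative is automatic: a step that would make an occupation
number negative carries the factor `1 - t^0 = 0` or is forbidden (`Pprod_eq`). Hence, once `I^M = K`,
`Π` is a plain product of weights, in which the factor at position `s` depends on the occupation vector `I^{s-1}`
and the two letters at `s`. Exchanging letters in positions `i, i + 1`, in either of the words `j`
and `l`, changes only the occupation vector between these two positions (`Istep_comp`), and changes
the inversion numbers only through the pair `(i, i + 1)` itself (`invNum_swap`).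

Sum now over the orbits of `j` under the exchange of its letters in positions `i, i + 1`, which
means symmetrising the sum over `j` and cancelling a factor `2`. The claim becomes an identity for
two consecutive vertices with spectral parameters `x` and `t x`, symmetric in the outgoing colours
(`loc_symm`). It is a polynomial identity in `x` and in powers of `t`, checked for every relative
order of the four colours (`loc_lt`).

The powers of `t` are handled through an arbitrary map `tpow` from `(ℤ, +)` to the multiplicative
monoid of a commutative ring that turns sums into products.
-/

open Finset

noncomputable section

attribute [local instance] Classical.propDecidable

/-- The words in `{0,…,n}^M` with content `J`. -/
def wrd (n M : ℕ) (J : ℕ → ℕ) : Finset (Fin M → ℕ) :=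
  (Fintype.piFinset fun _ : Fin M => Finset.range (n + 1)).filter fun w =>
    ∀ a ∈ Finset.Icc 1 n, (Finset.univ.filter fun s => w s = a).card = J a

/-- The inversion number `𝓘(w) = #{(a,b) : a < b, w_a < w_b}`. -/
def invNum (M : ℕ) (w : Fin M → ℕ) : ℕ :=
  (Finset.univ.filter fun p : Fin M × Fin M => p.1 < p.2 ∧ w p.1 < w p.2).card

/-- The reversed word `rev(w) = (w_M, …, w_1)`. -/
def wrev (M : ℕ) (w : Fin M → ℕ) : Fin M → ℕ := fun s => w s.rev

/-- The intermediate occupation vector `I^s = I + ∑_{r ≤ s} (e_{j_r} - e_{ℓ_r})`. -/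
def Istep (M : ℕ) (I : ℕ → ℕ) (j l : Fin M → ℕ) (s a : ℕ) : ℤ :=
  (I a : ℤ) + ∑ r : Fin M,
    (if (r : ℕ) < s then
      ((if a = j r then 1 else 0) - (if a = l r then 1 else 0)) else 0)

/-- The vertex weight `L^{j,i}_{I,K}(x)`.  Here `tpow m` represents `t^m`. -/
def Lw {R : Type*} [CommRing R] (tpow : ℤ → R) (n : ℕ) (Ib It : ℕ → ℤ) (j i : ℕ)
    (xv : R) : R :=
  if ∀ a ∈ Finset.Icc 1 n,
      Ib a + (if a = j then 1 else 0) = It a + (if a = i then 1 else 0) then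
    if i = 0 then 1
    else if j = i then xv * tpow (∑ a ∈ Finset.Icc (i + 1) n, Ib a)
    else if j < i then xv * (1 - tpow (Ib i)) * tpow (∑ a ∈ Finset.Icc (i + 1) n, Ib a)
    else 0
  else 0

/-- `Π(j, ℓ; I, K; x) = ∏_{s=1}^M L^{j_s,ℓ_s}_{I^{s-1},I^s}(t^{s-1} x)`, which is `0`
unless every `I^s` lies in `ℕ^n` and `I^M = K`. -/
def Pprod {R : Type*} [CommRing R] (tpow : ℤ → R) (n M : ℕ) (j l : Fin M → ℕ)
    (I K : ℕ → ℕ) (xv : R) : R :=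
  if (∀ s ∈ Finset.range (M + 1), ∀ a ∈ Finset.Icc 1 n, 0 ≤ Istep M I j l s a) ∧
      (∀ a ∈ Finset.Icc 1 n, Istep M I j l M a = (K a : ℤ)) then
    ∏ s : Fin M,
      Lw tpow n (Istep M I j l s) (Istep M I j l ((s : ℕ) + 1)) (j s) (l s)
        (tpow (s : ℕ) * xv)
  else 0


/-! ### The exchange relation for two consecutive vertices -/

/-- The vertex weight `L^{j,i}_{A,·}(x)` with the conservation constraint dropped. -/
def om {R : Type*} [CommRing R] (tpow : ℤ → R) (n : ℕ) (A : ℕ → ℤ) (j i : ℕ) (x : R) : R :=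
  if i = 0 then 1
  else if j = i then x * tpow (∑ a ∈ Finset.Icc (i + 1) n, A a)
  else if j < i then x * (1 - tpow (A i)) * tpow (∑ a ∈ Finset.Icc (i + 1) n, A a)
  else 0

/-- The occupation vector `A + e_a - e_p`. -/
def shf (A : ℕ → ℤ) (a p : ℕ) : ℕ → ℤ := fun c =>
  A c + ((if c = a then 1 else 0) - (if c = p then 1 else 0))

lemma sum_shf (A : ℕ → ℤ) (n a p i : ℕ) (ha : a ≤ n) (hp : p ≤ n) :
    ∑ c ∈ Finset.Icc (i + 1) n, shf A a p c =
      ∑ c ∈ Finset.Icc (i + 1) n, A c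
        + ((if i < a then 1 else 0) - (if i < p then 1 else 0)) := by
  unfold shf
  rw [Finset.sum_add_distrib, Finset.sum_sub_distrib, Finset.sum_ite_eq', Finset.sum_ite_eq']
  simp [Finset.mem_Icc, ha, hp]

/-- The weight of two consecutive vertices with incoming colours `a, b` and outgoing colours
`p, q`, the spectral parameter being multiplied by `t` from one vertex to the next. -/
def loc {R : Type*} [CommRing R] (tpow : ℤ → R) (n : ℕ) (A : ℕ → ℤ) (a b p q : ℕ) (x : R) : R :=
  om tpow n A a p x * om tpow n (shf A a p) b q (tpow 1 * x)

/-- The local exchange relation when the outgoing colours satisfy `q < p`. By the symmetry in the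
incoming colours one may take `a ≤ b`; the relation is then checked for each position of `a` and
`b` relative to `q` and `p`. -/
lemma loc_lt {R : Type*} [CommRing R] (tpow : ℤ → R) (hadd : ∀ m k, tpow (m + k) = tpow m * tpow k)
    (h0 : tpow 0 = 1) (n : ℕ) (A : ℕ → ℤ) (a b p q : ℕ) (x : R)
    (ha : a ≤ n) (hb : b ≤ n) (hp : p ≤ n) (hqp : q < p) (hab : a ≤ b) :
    tpow 1 * (loc tpow n A a b p q x
        + tpow (-(if a < b then 1 else 0)) * loc tpow n A b a p q x) =
      loc tpow n A a b q p x
        + tpow (-(if a < b then 1 else 0)) * loc tpow n A b a q p x := by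
  have hq : q ≤ n := by omega
  -- `tpow 1` and `tpow (-1)` are treated below as two ring elements with product `1`
  have h1 : tpow 1 * tpow (-1) = 1 := by rw [← hadd]; simpa using h0
  have hpq : ¬ p < q := by omega
  have hp0 : p ≠ 0 := by omega
  have hne : p ≠ q := by omega
  have hne' : q ≠ p := by omega
  unfold loc om
  rw [sum_shf A n a p q ha hp, sum_shf A n b p q hb hp, sum_shf A n a q p ha hq,
    sum_shf A n b q p hb hq]
  generalize (∑ c ∈ Finset.Icc (p + 1) n, A c) = Sp
  generalize (∑ c ∈ Finset.Icc (q + 1) n, A c) = Sq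
  unfold shf
  simp only [sub_eq_add_neg, hadd]
  generalize A p = Ap
  generalize A q = Aq
  generalize tpow Sp = sp
  generalize tpow Sq = sq
  generalize tpow Ap = ap
  generalize tpow Aq = aq
  have hq0 : q = 0 ∨ q ≠ 0 := by omega
  have hA : a < q ∨ a = q ∨ (q < a ∧ a < p) ∨ a = p ∨ p < a := by omega
  have hB : b < q ∨ b = q ∨ (q < b ∧ b < p) ∨ b = p ∨ p < b := by omega
  have hC : a < b ∨ a = b := by omega
  rcases hA with h | h | h | h | h <;> rcases hB with h' | h' | h' | h' | h' <;>
    rcases hC with h'' | h'' <;> rcases hq0 with h3 | h3 <;> try omega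
  all_goals
    simp (disch := omega) only [if_pos, if_neg, h0, neg_zero]
    clear * - h1 h0
    generalize tpow 1 = u at *
    generalize tpow (-1) = v at *
    grind

/-- The local exchange relation, symmetric in the outgoing colours `p, q`. -/
lemma loc_symm {R : Type*} [CommRing R] (tpow : ℤ → R)
    (hadd : ∀ m k, tpow (m + k) = tpow m * tpow k)
    (h0 : tpow 0 = 1) (n : ℕ) (A : ℕ → ℤ) (a b p q : ℕ) (x : R)
    (ha : a ≤ n) (hb : b ≤ n) (hp : p ≤ n) (hq : q ≤ n) :
    tpow (if q < p then 1 else 0) * (tpow (-(if b < a then 1 else 0)) * loc tpow n A a b p q x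
        + tpow (-(if a < b then 1 else 0)) * loc tpow n A b a p q x) =
      tpow (if p < q then 1 else 0) * (tpow (-(if b < a then 1 else 0)) * loc tpow n A a b q p x
        + tpow (-(if a < b then 1 else 0)) * loc tpow n A b a q p x) := by
  wlog hab : a ≤ b generalizing a b
  · have := this b a hb ha (by omega)
    linear_combination this
  wlog hqp : q ≤ p generalizing p q
  · exact (this q p hq hp (by omega)).symm
  rcases eq_or_lt_of_le hqp with rfl | hqp
  · rfl
  have := loc_lt tpow hadd h0 n A a b p q x ha hb hp hqp hab
  rw [if_pos hqp, if_neg (by omega : ¬ b < a), if_neg (by omega : ¬ p < q), neg_zero, h0, one_mul,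
    one_mul, one_mul]
  exact this

/-! ### Occupation vectors and the product of weights -/

lemma Istep_zero (M : ℕ) (I : ℕ → ℕ) (j l : Fin M → ℕ) (a : ℕ) :
    Istep M I j l 0 a = I a := by
  simp [Istep]

lemma Istep_succ (M : ℕ) (I : ℕ → ℕ) (j l : Fin M → ℕ) (r : Fin M) :
    Istep M I j l ((r : ℕ) + 1) = shf (Istep M I j l r) (j r) (l r) := by
  funext a
  unfold Istep shf
  rw [add_assoc]
  congr 1
  rw [← Finset.add_sum_erase _ _ (Finset.mem_univ r),
    ← Finset.add_sum_erase (a := r) _ (fun r' : Fin M => if (r' : ℕ) < (r : ℕ) then _ else _)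
      (Finset.mem_univ r)]
  rw [if_pos (Nat.lt_succ_self _), if_neg (lt_irrefl _), zero_add, add_comm]
  congr 1
  refine Finset.sum_congr rfl fun r' hr' => ?_
  have hne : (r' : ℕ) ≠ r := fun h => (Finset.ne_of_mem_erase hr') (Fin.ext h)
  by_cases h : (r' : ℕ) < r
  · rw [if_pos h, if_pos (by omega)]
  · rw [if_neg h, if_neg (by omega)]

/-- The occupation vectors depend on the two words only through partial sums, so permuting both
words by a permutation that preserves `{r < s}` does not change `I^s`. -/
lemma Istep_comp (M : ℕ) (I : ℕ → ℕ) (j l : Fin M → ℕ) (σ τ : Equiv.Perm (Fin M)) (s : ℕ)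
    (hσ : ∀ r, ((σ r : ℕ) < s ↔ (r : ℕ) < s)) (hτ : ∀ r, ((τ r : ℕ) < s ↔ (r : ℕ) < s)) :
    Istep M I (j ∘ σ) (l ∘ τ) s = Istep M I j l s := by
  funext a
  unfold Istep
  congr 1
  have key : ∀ (w : Fin M → ℕ) (ρ : Equiv.Perm (Fin M)),
      (∀ r, ((ρ r : ℕ) < s ↔ (r : ℕ) < s)) →
      ∑ r : Fin M, (if (r : ℕ) < s then (if a = (w ∘ ρ) r then (1 : ℤ) else 0) else 0) =
        ∑ r : Fin M, (if (r : ℕ) < s then (if a = w r then (1 : ℤ) else 0) else 0) := by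
    intro w ρ hρ
    rw [← Equiv.sum_comp ρ (fun r : Fin M =>
      (if (r : ℕ) < s then (if a = w r then (1 : ℤ) else 0) else 0))]
    refine Finset.sum_congr rfl fun r _ => ?_
    by_cases h : (r : ℕ) < s
    · rw [if_pos h, if_pos ((hρ r).2 h)]; rfl
    · rw [if_neg h, if_neg (fun h' => h ((hρ r).1 h'))]
  have split : ∀ (j l : Fin M → ℕ), ∑ r : Fin M, (if (r : ℕ) < s then
      ((if a = j r then (1 : ℤ) else 0) - (if a = l r then 1 else 0)) else 0) =
      ∑ r : Fin M, (if (r : ℕ) < s then (if a = j r then (1 : ℤ) else 0) else 0) -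
      ∑ r : Fin M, (if (r : ℕ) < s then (if a = l r then (1 : ℤ) else 0) else 0) := by
    intro j l
    rw [← Finset.sum_sub_distrib]
    refine Finset.sum_congr rfl fun r _ => ?_
    split_ifs <;> simp
  rw [split, split, key j σ hσ, key l τ hτ]

lemma Lw_eq_om {R : Type*} [CommRing R] (tpow : ℤ → R) (n : ℕ) (A : ℕ → ℤ) (a p : ℕ) (x : R) :
    Lw tpow n A (shf A a p) a p x = om tpow n A a p x := by
  unfold Lw
  rw [if_pos]
  · rfl
  · intro c _
    unfold shf
    ring

/-- The conditions `I^s ∈ ℕ^n` and the conservation constraints may be dropped from `Pprod`: the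
first step at which some coordinate would become negative removes a particle of a colour `i` whose
occupation number is zero, and then carries the factor `1 - t^0 = 0`, or is forbidden. -/
lemma Pprod_eq {R : Type*} [CommRing R] (tpow : ℤ → R) (h0 : tpow 0 = 1) (n M : ℕ)
    (j l : Fin M → ℕ) (I K : ℕ → ℕ) (x : R) :
    Pprod tpow n M j l I K x =
      if ∀ a ∈ Finset.Icc 1 n, Istep M I j l M a = (K a : ℤ) then
        ∏ r : Fin M, om tpow n (Istep M I j l r) (j r) (l r) (tpow (r : ℕ) * x)
      else 0 := by
  unfold Pprod
  simp only [Istep_succ, Lw_eq_om]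
  by_cases hK : ∀ a ∈ Finset.Icc 1 n, Istep M I j l M a = (K a : ℤ)
  swap
  · rw [if_neg hK, if_neg (fun h => hK h.2)]
  rw [if_pos hK]
  by_cases hN : ∀ s ∈ Finset.range (M + 1), ∀ a ∈ Finset.Icc 1 n, 0 ≤ Istep M I j l s a
  · rw [if_pos ⟨hN, hK⟩]
  rw [if_neg (fun h => hN h.1)]
  push Not at hN
  obtain ⟨s, hs, a, ha, hneg⟩ := hN
  -- a step at which coordinate `a` goes from nonnegative to negative
  have hex : ∃ s, Istep M I j l s a < 0 := ⟨s, hneg⟩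
  obtain ⟨hlt, hmin⟩ := And.intro (Nat.find_spec hex) (fun m => Nat.find_min hex (m := m))
  have hle : Nat.find hex ≤ s := Nat.find_min' hex hneg
  generalize Nat.find hex = N at hlt hmin hle
  rcases N with _ | N
  · rw [Istep_zero] at hlt
    omega
  have hNM : N < M := by
    have := Finset.mem_range.1 hs
    omega
  have hge := hmin N (Nat.lt_succ_self N)
  have hstep := congrFun (Istep_succ M I j l ⟨N, hNM⟩) a
  simp only [shf] at hstep
  rw [hstep] at hlt
  symm
  refine Finset.prod_eq_zero (Finset.mem_univ (⟨N, hNM⟩ : Fin M)) ?_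
  have hal : a = l ⟨N, hNM⟩ := by
    by_contra h
    rw [if_neg h] at hlt
    split_ifs at hlt <;> omega
  have haj : a ≠ j ⟨N, hNM⟩ := by
    intro h
    rw [if_pos h, if_pos hal] at hlt
    omega
  rw [if_neg haj, if_pos hal] at hlt
  have hz : Istep M I j l N a = 0 := by omega
  have ha1 := (Finset.mem_Icc.1 ha).1
  unfold om
  rw [← hal, if_neg (by omega), if_neg (Ne.symm haj)]
  simp only [hz, h0, sub_self, mul_zero, zero_mul, ite_self]

/-! ### Inversion numbers -/

lemma invNum_wrev (M : ℕ) (w : Fin M → ℕ) :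
    (invNum M (wrev M w) : ℤ) =
      ∑ p : Fin M × Fin M, if p.1 < p.2 ∧ w p.2 < w p.1 then 1 else 0 := by
  unfold invNum wrev
  rw [Finset.card_filter]
  push_cast
  rw [← Equiv.sum_comp ((Equiv.prodComm _ _).trans (Equiv.prodCongr Fin.revPerm Fin.revPerm))]
  refine Finset.sum_congr rfl fun p _ => ?_
  simp

/-- Exchanging the letters at two adjacent positions only affects the inversion count through that
pair of positions. -/
lemma invNum_swap (m : ℕ) (i : Fin m) (w : Fin (m + 1) → ℕ) :
    (invNum (m + 1) (wrev (m + 1) (w ∘ Equiv.swap i.castSucc i.succ)) : ℤ)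
        - (if w i.castSucc < w i.succ then 1 else 0) =
      (invNum (m + 1) (wrev (m + 1) w) : ℤ) - (if w i.succ < w i.castSucc then 1 else 0) := by
  set σ := Equiv.swap i.castSucc i.succ with hσ
  have hne : i.castSucc ≠ i.succ := (Fin.castSucc_lt_succ).ne
  have hσσ : ∀ r, σ (σ r) = r := fun r => Equiv.swap_apply_self _ _ _
  rw [invNum_wrev, invNum_wrev, ← Equiv.sum_comp (Equiv.prodCongr σ σ)]
  have hsum : ∀ (P : Fin (m + 1) × Fin (m + 1)) (c : ℤ),
      c = ∑ p : Fin (m + 1) × Fin (m + 1), if p = P then c else 0 := by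
    intro P c; simp
  rw [hsum (i.succ, i.castSucc) (if w i.castSucc < w i.succ then 1 else 0),
    hsum (i.castSucc, i.succ) (if w i.succ < w i.castSucc then 1 else 0),
    ← Finset.sum_sub_distrib, ← Finset.sum_sub_distrib]
  refine Finset.sum_congr rfl fun p _ => ?_
  obtain ⟨r, s⟩ := p
  simp only [Equiv.prodCongr_apply, Prod.map, Function.comp, hσσ, Prod.mk.injEq]
  by_cases hA : r = i.succ ∧ s = i.castSucc
  · obtain ⟨rfl, rfl⟩ := hA
    rw [hσ, Equiv.swap_apply_left, Equiv.swap_apply_right]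
    simp [Fin.lt_def, Fin.ext_iff]
  by_cases hB : r = i.castSucc ∧ s = i.succ
  · obtain ⟨rfl, rfl⟩ := hB
    rw [hσ, Equiv.swap_apply_left, Equiv.swap_apply_right]
    simp [Fin.lt_def, Fin.ext_iff]
  rw [if_neg hA, if_neg hB]
  have hval : ∀ r : Fin (m + 1), (σ r : ℕ) =
      if (r : ℕ) = i then (i : ℕ) + 1 else if (r : ℕ) = i + 1 then (i : ℕ) else r := by
    intro r
    rw [hσ, Equiv.swap_apply_def]
    simp only [Fin.ext_iff, Fin.val_castSucc, Fin.val_succ]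
    split_ifs <;> simp
  have hlt : σ r < σ s ↔ r < s := by
    rw [Fin.lt_def, Fin.lt_def, hval, hval]
    simp only [Fin.ext_iff, Fin.val_castSucc, Fin.val_succ] at hA hB
    split_ifs <;> omega
  simp only [hlt]

/-! ### Exchanging two adjacent letters -/

/-- Summing over the two orders of the letters of `j` in the adjacent positions `i, i + 1`
reduces the exchange of the letters of `l` in these positions to the local relation `loc_symm`. -/
lemma pair_eq {R : Type*} [CommRing R] (tpow : ℤ → R)
    (hadd : ∀ m k, tpow (m + k) = tpow m * tpow k) (h0 : tpow 0 = 1) (n m : ℕ)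
    (i : Fin m) (j l : Fin (m + 1) → ℕ) (hj : ∀ s, j s ≤ n) (hl : ∀ s, l s ≤ n)
    (I K : ℕ → ℕ) (x : R) (σ : Equiv.Perm (Fin (m + 1)))
    (hσ : σ = Equiv.swap i.castSucc i.succ) :
    tpow (invNum (m + 1) (wrev (m + 1) (l ∘ σ))) *
      (tpow (-(invNum (m + 1) (wrev (m + 1) j) : ℤ)) * Pprod tpow n (m + 1) j (l ∘ σ) I K x +
       tpow (-(invNum (m + 1) (wrev (m + 1) (j ∘ σ)) : ℤ)) *
        Pprod tpow n (m + 1) (j ∘ σ) (l ∘ σ) I K x) =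
    tpow (invNum (m + 1) (wrev (m + 1) l)) *
      (tpow (-(invNum (m + 1) (wrev (m + 1) j) : ℤ)) * Pprod tpow n (m + 1) j l I K x +
       tpow (-(invNum (m + 1) (wrev (m + 1) (j ∘ σ)) : ℤ)) *
        Pprod tpow n (m + 1) (j ∘ σ) l I K x) := by
  have hne : i.castSucc ≠ i.succ := (Fin.castSucc_lt_succ).ne
  have hσc : σ i.castSucc = i.succ := by rw [hσ, Equiv.swap_apply_left]
  have hσs : σ i.succ = i.castSucc := by rw [hσ, Equiv.swap_apply_right]
  have hσo : ∀ r, r ≠ i.castSucc → r ≠ i.succ → σ r = r := fun r h h' => by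
    rw [hσ, Equiv.swap_apply_of_ne_of_ne h h']
  have hlow : ∀ s : ℕ, s ≠ i + 1 → ∀ r, ((σ r : ℕ) < s ↔ (r : ℕ) < s) := by
    intro s hs r
    by_cases h1 : r = i.castSucc
    · rw [h1, hσc]; simp; omega
    by_cases h2 : r = i.succ
    · rw [h2, hσs]; simp; omega
    rw [hσo r h1 h2]
  have hid : ∀ s : ℕ, ∀ r, (((1 : Equiv.Perm (Fin (m + 1))) r : ℕ) < s ↔ (r : ℕ) < s) :=
    fun _ _ => Iff.rfl
  set A := Istep (m + 1) I j l i with hA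
  set rest : R := ∏ r ∈ (Finset.univ.erase i.castSucc).erase i.succ,
    om tpow n (Istep (m + 1) I j l r) (j r) (l r) (tpow (r : ℕ) * x) with hrest
  -- splits off the weights at `i` and `i + 1`; applied to each of `j`, `j ∘ σ` and `l`, `l ∘ σ`
  have key : ∀ j' l' : Fin (m + 1) → ℕ,
      (∀ s : ℕ, s ≠ i + 1 → Istep (m + 1) I j' l' s = Istep (m + 1) I j l s) →
      (∀ r, r ≠ i.castSucc → r ≠ i.succ → j' r = j r ∧ l' r = l r) →
      Pprod tpow n (m + 1) j' l' I K x =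
        (if ∀ a ∈ Finset.Icc 1 n, Istep (m + 1) I j l (m + 1) a = (K a : ℤ) then rest else 0) *
          loc tpow n A (j' i.castSucc) (j' i.succ) (l' i.castSucc) (l' i.succ)
            (tpow (i : ℕ) * x) := by
    intro j' l' hI hjl
    rw [Pprod_eq tpow h0, hI (m + 1) (by have := i.2; omega), ite_mul, zero_mul]
    congr 1
    rw [← Finset.mul_prod_erase _ _ (Finset.mem_univ i.castSucc),
      ← Finset.mul_prod_erase _ _
        (Finset.mem_erase.2 ⟨hne.symm, Finset.mem_univ i.succ⟩), ← mul_assoc, mul_comm]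
    congr 1
    · refine Finset.prod_congr rfl fun r hr => ?_
      obtain ⟨hr1, hr2⟩ := Finset.mem_erase.1 hr
      have hr2 := Finset.ne_of_mem_erase hr2
      obtain ⟨e1, e2⟩ := hjl r hr2 hr1
      rw [e1, e2, hI r (fun h => hr1 (Fin.ext (by simpa using h)))]
    · have hs := Istep_succ (m + 1) I j' l' i.castSucc
      have hc := hI i (by omega)
      rw [Fin.val_castSucc] at hs
      unfold loc
      rw [Fin.val_castSucc, Fin.val_succ, hs, hc, Nat.cast_add, add_comm (i : ℤ), hadd, mul_assoc,
        Nat.cast_one]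
  have hmove : ∀ (w : Fin (m + 1) → ℕ) r, r ≠ i.castSucc → r ≠ i.succ → (w ∘ σ) r = w r := by
    intro w r h1 h2
    simp only [Function.comp, hσo r h1 h2]
  rw [key j l (fun _ _ => rfl) (fun _ _ _ => ⟨rfl, rfl⟩),
    key (j ∘ σ) l (fun s hs => Istep_comp _ I j l σ 1 s (hlow s hs) (hid s))
      (fun r h1 h2 => ⟨hmove j r h1 h2, rfl⟩),
    key j (l ∘ σ) (fun s hs => Istep_comp _ I j l 1 σ s (hid s) (hlow s hs))
      (fun r h1 h2 => ⟨rfl, hmove l r h1 h2⟩),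
    key (j ∘ σ) (l ∘ σ) (fun s hs => Istep_comp _ I j l σ σ s (hlow s hs) (hlow s hs))
      (fun r h1 h2 => ⟨hmove j r h1 h2, hmove l r h1 h2⟩)]
  have hjinv := invNum_swap m i j
  have hlinv := invNum_swap m i l
  rw [← hσ] at hjinv hlinv
  have hloc := loc_symm tpow hadd h0 n A (j i.castSucc) (j i.succ) (l i.castSucc) (l i.succ)
    (tpow (i : ℕ) * x) (hj _) (hj _) (hl _) (hl _)
  simp only [Function.comp_apply, hσc, hσs]
  generalize (if ∀ a ∈ Finset.Icc 1 n, Istep (m + 1) I j l (m + 1) a = (K a : ℤ)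
    then rest else 0) = Q
  generalize (invNum (m + 1) (wrev (m + 1) (l ∘ σ)) : ℤ) = lσ at *
  generalize (invNum (m + 1) (wrev (m + 1) (j ∘ σ)) : ℤ) = jσ at *
  obtain ⟨dl, hdl⟩ : ∃ d, d = (invNum (m + 1) (wrev (m + 1) l) : ℤ)
    - (if l i.succ < l i.castSucc then 1 else 0) := ⟨_, rfl⟩
  obtain ⟨dj, hdj⟩ : ∃ d, d = (invNum (m + 1) (wrev (m + 1) j) : ℤ)
    - (if j i.succ < j i.castSucc then 1 else 0) := ⟨_, rfl⟩
  rw [← hdl] at hlinv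
  rw [← hdj] at hjinv
  rw [sub_eq_iff_eq_add] at hlinv hjinv
  rw [eq_comm, sub_eq_iff_eq_add] at hdl hdj
  rw [hdl, hdj, hlinv, hjinv]
  simp only [neg_add, hadd]
  linear_combination (-(tpow dl * tpow (-dj) * Q)) * hloc

/-! ### Permutations of the outgoing word -/

lemma mem_wrd (n M : ℕ) (J : ℕ → ℕ) (w : Fin M → ℕ) :
    w ∈ wrd n M J ↔ (∀ s, w s ≤ n) ∧
      ∀ a ∈ Finset.Icc 1 n, (Finset.univ.filter fun s => w s = a).card = J a := by
  simp only [wrd, Finset.mem_filter, Fintype.mem_piFinset, Finset.mem_range, Nat.lt_succ_iff]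

lemma comp_mem_wrd (n M : ℕ) (J : ℕ → ℕ) (σ : Equiv.Perm (Fin M)) (j : Fin M → ℕ)
    (hj : j ∈ wrd n M J) : j ∘ σ ∈ wrd n M J := by
  rw [mem_wrd] at *
  refine ⟨fun s => hj.1 (σ s), fun a ha => ?_⟩
  rw [← hj.2 a ha]
  exact Finset.card_equiv σ (by simp)

/-- The partition function with outgoing word `l`, summed over the incoming words of content `J`
and normalised by inversion numbers. -/
def part {R : Type*} [CommRing R] (tpow : ℤ → R) (n M : ℕ) (J I K : ℕ → ℕ) (x : R)
    (l : Fin M → ℕ) : R :=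
  tpow (invNum M (wrev M l) : ℤ) *
    ∑ j ∈ wrd n M J, tpow (-(invNum M (wrev M j) : ℤ)) * Pprod tpow n M j l I K x

lemma two_mul_part {R : Type*} [CommRing R] (tpow : ℤ → R) (n M : ℕ) (J I K : ℕ → ℕ) (x : R)
    (l : Fin M → ℕ) (σ : Equiv.Perm (Fin M)) :
    2 * part tpow n M J I K x l = ∑ j ∈ wrd n M J, tpow (invNum M (wrev M l) : ℤ) *
      (tpow (-(invNum M (wrev M j) : ℤ)) * Pprod tpow n M j l I K x +
        tpow (-(invNum M (wrev M (j ∘ σ)) : ℤ)) * Pprod tpow n M (j ∘ σ) l I K x) := by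
  have hre : ∑ j ∈ wrd n M J, tpow (-(invNum M (wrev M (j ∘ σ)) : ℤ)) *
        Pprod tpow n M (j ∘ σ) l I K x =
      ∑ j ∈ wrd n M J, tpow (-(invNum M (wrev M j) : ℤ)) * Pprod tpow n M j l I K x := by
    refine Finset.sum_bij' (fun j _ => j ∘ σ) (fun j _ => j ∘ σ.symm)
      (fun j hj => comp_mem_wrd n M J σ j hj) (fun j hj => comp_mem_wrd n M J σ.symm j hj)
      ?_ ?_ ?_
    · intro j _; funext r; simp
    · intro j _; funext r; simp
    · intro j _; rfl
  rw [← Finset.mul_sum, Finset.sum_add_distrib, hre, part]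
  ring

lemma part_swap {R : Type*} [CommRing R] [IsDomain R] [CharZero R] (tpow : ℤ → R)
    (hadd : ∀ m k, tpow (m + k) = tpow m * tpow k) (h0 : tpow 0 = 1) (n m : ℕ)
    (i : Fin m) (l : Fin (m + 1) → ℕ) (hl : ∀ s, l s ≤ n) (J I K : ℕ → ℕ) (x : R) :
    part tpow n (m + 1) J I K x (l ∘ Equiv.swap i.castSucc i.succ) =
      part tpow n (m + 1) J I K x l := by
  refine mul_left_cancel₀ (two_ne_zero (α := R)) ?_
  rw [two_mul_part _ _ _ _ _ _ _ _ (Equiv.swap i.castSucc i.succ),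
    two_mul_part _ _ _ _ _ _ _ _ (Equiv.swap i.castSucc i.succ)]
  refine Finset.sum_congr rfl fun j hj => ?_
  exact pair_eq tpow hadd h0 n m i j l ((mem_wrd _ _ _ _).1 hj).1 hl I K x _ rfl

/-- Adjacent transpositions generate the symmetric group. -/
lemma part_perm {R : Type*} [CommRing R] [IsDomain R] [CharZero R] (tpow : ℤ → R)
    (hadd : ∀ m k, tpow (m + k) = tpow m * tpow k) (h0 : tpow 0 = 1) (n m : ℕ)
    (J I K : ℕ → ℕ) (x : R) (π : Equiv.Perm (Fin (m + 1))) (l : Fin (m + 1) → ℕ)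
    (hl : ∀ s, l s ≤ n) :
    part tpow n (m + 1) J I K x (l ∘ π) = part tpow n (m + 1) J I K x l := by
  have hπ : π ∈ Submonoid.closure
      (Set.range fun i : Fin m => Equiv.swap i.castSucc i.succ) := by
    rw [Equiv.Perm.mclosure_swap_castSucc_succ]
    exact Submonoid.mem_top π
  induction hπ using Submonoid.closure_induction generalizing l with
  | mem σ hσ =>
    obtain ⟨i, rfl⟩ := hσ
    exact part_swap tpow hadd h0 n m i l hl J I K x
  | one => rfl
  | mul σ τ _ _ ihσ ihτ =>
    rw [Equiv.Perm.coe_mul, ← Function.comp_assoc, ihτ (l ∘ σ) (fun s => hl _), ihσ l hl]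

theorem statement15 (n M : ℕ) (hn : 1 ≤ n) (hM : 1 ≤ M) (J : ℕ → ℕ)
    (hJ : ∑ a ∈ Finset.Icc 1 n, J a ≤ M) (I K : ℕ → ℕ)
    (l : Fin M → ℕ) (hl : ∀ s, l s ≤ n) (π π' : Equiv.Perm (Fin M)) :
    LaurentPolynomial.T (invNum M (wrev M (l ∘ π)) : ℤ) *
        ∑ j ∈ wrd n M J,
          LaurentPolynomial.T (-(invNum M (wrev M j) : ℤ)) *
            Pprod (R := LaurentPolynomial (Polynomial ℤ)) (fun m => LaurentPolynomial.T m) n M j (l ∘ π) I K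
              (LaurentPolynomial.C Polynomial.X) =
      LaurentPolynomial.T (invNum M (wrev M (l ∘ π')) : ℤ) *
        ∑ j ∈ wrd n M J,
          LaurentPolynomial.T (-(invNum M (wrev M j) : ℤ)) *
            Pprod (R := LaurentPolynomial (Polynomial ℤ)) (fun m => LaurentPolynomial.T m) n M j (l ∘ π') I K
              (LaurentPolynomial.C Polynomial.X) := by
  obtain ⟨m, rfl⟩ : ∃ m, M = m + 1 := ⟨M - 1, by omega⟩
  have : CharZero (LaurentPolynomial (Polynomial ℤ)) :=
    charZero_of_injective_ringHom (f := Polynomial.toLaurent) Polynomial.toLaurent_injective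
  have h := fun ρ => part_perm (R := LaurentPolynomial (Polynomial ℤ))
    (fun m => LaurentPolynomial.T m) (fun a b => LaurentPolynomial.T_add a b)
    LaurentPolynomial.T_zero n m J I K (LaurentPolynomial.C Polynomial.X) ρ l hl
  exact (h π).trans (h π').symm
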